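/- For every x in the free group F, every n ∈ ℕ and every real number t, the number of elements w ∈ F with |w| = n and |w x| ≤ |x| − t is at most 2 · q^{(n−t)/2} (real power of q). This is the counting estimate behind the truncation operators Q_n^α used to prove the restricted weak type (2,2) bound for λ(χ_n). -/

import Mathlib

open scoped ENNReal

noncomputable section

/-- Word length on the free group: the number of letters of the reduced word. -/
def wlen {α : Type*} [DecidableEq α] (x : FreeGroup α) : ℕ := x.toWord.length

/-!
Let `|w| = n` and write `w = u c⁻¹`, `x = c v` without cancellation, so that `w x = u v` is reduced.
If `|w x| ≤ |x| - t`, then `u` has at most `k = ⌊(n - t) / 2⌋` letters. Hence all letters of `w`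
after the first `k` are inverses of letters of `x` and are determined by `x`: there are at most as
many such `w` as reduced words of length `min k n`. Each of these can be preceded by the letter `a`
or by `a⁻¹`, for a fixed generator `a`, which bounds their number by `2 q ^ min k n`.
-/

section Chains

variable {β : Type*} [Fintype β] {R : β → β → Prop} [DecidableRel R] {d : ℕ}

theorem encard_isChain_cons_le (hR : ∀ a, (Finset.univ.filter (R a)).card ≤ d) (k : ℕ) (a : β) :
    {l : List β | l.length = k ∧ (a :: l).IsChain R}.encard ≤ d ^ k := by
  induction k generalizing a with
  | zero =>
    refine (Set.encard_le_encard (t := {[]}) fun l hl ↦ ?_).trans (by simp)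
    exact List.length_eq_zero_iff.mp hl.1
  | succ k ih =>
    have hcover : {l : List β | l.length = k + 1 ∧ (a :: l).IsChain R} ⊆
        ⋃ b ∈ Finset.univ.filter (R a),
          List.cons b '' {l | l.length = k ∧ (b :: l).IsChain R} := by
      rintro (_ | ⟨b, l⟩) ⟨hlen, hchain⟩
      · simp at hlen
      · rw [List.isChain_cons_cons] at hchain
        exact Set.mem_biUnion (by simpa using hchain.1) ⟨l, ⟨by simpa using hlen, hchain.2⟩, rfl⟩
    calc {l : List β | l.length = k + 1 ∧ (a :: l).IsChain R}.encard
        ≤ ∑ b ∈ Finset.univ.filter (R a),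
            (List.cons b '' {l | l.length = k ∧ (b :: l).IsChain R}).encard :=
          (Set.encard_le_encard hcover).trans (Finset.set_encard_biUnion_le _ _)
      _ ≤ (Finset.univ.filter (R a)).card • (d : ℕ∞) ^ k :=
          Finset.sum_le_card_nsmul _ _ _ fun b _ ↦ (Set.encard_image_le _ _).trans (ih b)
      _ ≤ d ^ (k + 1) := by
          rw [nsmul_eq_mul, pow_succ']
          gcongr
          exact hR a

end Chains

open FreeGroup

section Reduced

variable {α : Type*}

theorem isReduced_cons_or_isReduced_cons_not (a : α) (s : Bool) {L : List (α × Bool)}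
    (hL : IsReduced L) : IsReduced ((a, s) :: L) ∨ IsReduced ((a, !s) :: L) := by
  rcases L with _ | ⟨⟨b, s'⟩, L⟩
  · exact .inl .singleton
  · simp only [isReduced_cons_cons, hL, and_true]
    cases s <;> cases s' <;> simp

theorem isReduced_append_or_eq_inv {L M : List (α × Bool)} {a b : α × Bool}
    (hL : IsReduced (L ++ [a])) (hM : IsReduced (b :: M)) :
    IsReduced (L ++ [a] ++ b :: M) ∨ a = (b.1, !b.2) := by
  by_cases hab : a.1 = b.1 → a.2 = b.2
  · exact .inl (List.isChain_append.mpr ⟨hL, hM, by simpa using hab⟩)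
  · rw [Classical.not_imp] at hab
    exact .inr (Prod.ext hab.1 (Bool.eq_not.mpr hab.2))

theorem exists_isReduced_append_of_isReduced {L M : List (α × Bool)} (hL : IsReduced L)
    (hM : IsReduced M) : ∃ u c v, L = u ++ invRev c ∧ M = c ++ v ∧ IsReduced (u ++ v) := by
  induction L using List.reverseRecOn generalizing M with
  | nil => exact ⟨[], [], M, rfl, rfl, hM⟩
  | append_singleton L a ih =>
    rcases M with _ | ⟨b, M⟩
    · exact ⟨L ++ [a], [], [], by simp, rfl, by simpa using hL⟩
    rcases isReduced_append_or_eq_inv hL hM with hLM | rfl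
    · exact ⟨L ++ [a], [], b :: M, by simp, rfl, hLM⟩
    · obtain ⟨u, c, v, rfl, rfl, huv⟩ := ih (M := M) (hL.infix ⟨[], [_], rfl⟩)
        (hM.infix ⟨[b], [], by simp⟩)
      exact ⟨u, b :: c, v, by simp [invRev], rfl, huv⟩

theorem drop_append_invRev {u : List (α × Bool)} {k : ℕ} (hu : u.length ≤ k)
    (c : List (α × Bool)) :
    (u ++ invRev c).drop k = invRev (c.take (u.length + c.length - k)) := by
  rw [List.drop_append, List.drop_eq_nil_of_le hu, List.nil_append, invRev, List.drop_reverse,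
    List.length_map, ← List.map_take, invRev]
  congr 3
  omega

end Reduced

section Norm

variable {α : Type*} [DecidableEq α]

theorem wlen_eq_norm (x : FreeGroup α) : wlen x = x.norm := rfl

theorem norm_mk_of_isReduced {L : List (α × Bool)} (hL : IsReduced L) :
    (mk L).norm = L.length := by
  rw [FreeGroup.norm, toWord_mk, hL.reduce_eq]

theorem norm_le_norm_add_norm_mul (w x : FreeGroup α) : x.norm ≤ w.norm + (w * x).norm := by
  simpa using norm_mul_le w⁻¹ (w * x)

theorem exists_toWord_mul_eq_append (w x : FreeGroup α) :
    ∃ u c v, w.toWord = u ++ invRev c ∧ x.toWord = c ++ v ∧ (w * x).toWord = u ++ v := by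
  obtain ⟨u, c, v, hw, hx, huv⟩ :=
    exists_isReduced_append_of_isReduced (isReduced_toWord (x := w)) (isReduced_toWord (x := x))
  have hmul : w * x = mk (u ++ v) := by
    rw [← mk_toWord (x := w), ← mk_toWord (x := x), hw, hx]
    simp only [← mul_mk, ← inv_mk]
    group
  exact ⟨u, c, v, hw, hx, by rw [hmul, toWord_mk, huv.reduce_eq]⟩

-- As `|w x| + |w| - |x|` is even, the hypothesis says that at most `k` letters of `w` survive.
theorem drop_toWord_eq_invRev_take {w x : FreeGroup α} {k : ℕ}
    (h : (w * x).norm + w.norm < x.norm + 2 * (k + 1)) :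
    w.toWord.drop k = invRev (x.toWord.take (w.norm - k)) := by
  obtain ⟨u, c, v, hw, hx, hwx⟩ := exists_toWord_mul_eq_append w x
  have hw_norm : w.norm = u.length + c.length := by simp [FreeGroup.norm, hw]
  have hu : u.length ≤ k := by
    simp only [FreeGroup.norm, hw, hx, hwx, List.length_append, invRev_length] at h
    omega
  rw [hw, hx, hw_norm, drop_append_invRev hu, List.take_append_of_le_length (by omega)]

theorem exists_mul_inv_of_norm_mul_lt {w x : FreeGroup α} {k : ℕ}
    (h : (w * x).norm + w.norm < x.norm + 2 * (k + 1)) :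
    ∃ a : FreeGroup α, a.norm = min k w.norm ∧ a * (mk (x.toWord.take (w.norm - k)))⁻¹ = w := by
  refine ⟨mk (w.toWord.take k), ?_, ?_⟩
  · rw [norm_mk_of_isReduced (isReduced_toWord.infix (List.take_prefix _ _).isInfix),
      List.length_take, FreeGroup.norm]
  · rw [inv_mk, ← drop_toWord_eq_invRev_take h, mul_mk, List.take_append_drop, mk_toWord]

end Norm

section Counting

variable {α : Type*} [Fintype α]

theorem card_filter_eq_imp_eq [DecidableEq α] (a : α × Bool) :
    (Finset.univ.filter fun b : α × Bool ↦ a.1 = b.1 → a.2 = b.2).card =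
      2 * Fintype.card α - 1 := by
  have herase : (Finset.univ.filter fun b : α × Bool ↦ a.1 = b.1 → a.2 = b.2) =
      Finset.univ.erase (a.1, !a.2) := by
    ext ⟨b, s⟩
    simp [eq_comm, Bool.eq_not]
  rw [herase, Finset.card_erase_of_mem (Finset.mem_univ _), Finset.card_univ, Fintype.card_prod,
    Fintype.card_bool, mul_comm]

theorem encard_isReduced_cons_le (k : ℕ) (a : α × Bool) :
    {L : List (α × Bool) | L.length = k ∧ IsReduced (a :: L)}.encard ≤
      ((2 * Fintype.card α - 1 : ℕ) : ℕ∞) ^ k := by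
  classical exact encard_isChain_cons_le (fun a ↦ (card_filter_eq_imp_eq a).le) k a

variable [Nonempty α]

theorem one_le_two_mul_card_sub_one : 1 ≤ 2 * Fintype.card α - 1 := by
  have := Fintype.card_pos (α := α)
  omega

variable [DecidableEq α]

theorem encard_norm_eq_le (k : ℕ) :
    {x : FreeGroup α | x.norm = k}.encard ≤ 2 * ((2 * Fintype.card α - 1 : ℕ) : ℕ∞) ^ k := by
  obtain ⟨a⟩ := ‹Nonempty α›
  have hcover : toWord '' {x : FreeGroup α | x.norm = k} ⊆
      {L | L.length = k ∧ IsReduced ((a, true) :: L)} ∪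
        {L | L.length = k ∧ IsReduced ((a, false) :: L)} := by
    rintro _ ⟨x, hx, rfl⟩
    exact (isReduced_cons_or_isReduced_cons_not a true isReduced_toWord).imp (⟨hx, ·⟩) (⟨hx, ·⟩)
  rw [← toWord_injective.encard_image, two_mul]
  exact (Set.encard_le_encard hcover).trans <| (Set.encard_union_le _ _).trans <|
    add_le_add (encard_isReduced_cons_le k _) (encard_isReduced_cons_le k _)

theorem encard_norm_eq_and_norm_mul_lt_le (x : FreeGroup α) (n k : ℕ) :
    {w : FreeGroup α | w.norm = n ∧ (w * x).norm + n < x.norm + 2 * (k + 1)}.encard ≤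
      2 * ((2 * Fintype.card α - 1 : ℕ) : ℕ∞) ^ k := by
  have hsub : {w : FreeGroup α | w.norm = n ∧ (w * x).norm + n < x.norm + 2 * (k + 1)} ⊆
      (· * (mk (x.toWord.take (n - k)))⁻¹) '' {a : FreeGroup α | a.norm = min k n} := by
    rintro w ⟨rfl, h⟩
    exact exists_mul_inv_of_norm_mul_lt h
  have hq : 1 ≤ ((2 * Fintype.card α - 1 : ℕ) : ℕ∞) := mod_cast one_le_two_mul_card_sub_one
  calc _ ≤ {a : FreeGroup α | a.norm = min k n}.encard :=
        (Set.encard_le_encard hsub).trans (Set.encard_image_le _ _)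
    _ ≤ 2 * ((2 * Fintype.card α - 1 : ℕ) : ℕ∞) ^ min k n := encard_norm_eq_le _
    _ ≤ 2 * ((2 * Fintype.card α - 1 : ℕ) : ℕ∞) ^ k := by
        gcongr
        exact min_le_left k n

theorem count_truncated_words_general (x : FreeGroup α) (n : ℕ) (t : ℝ) :
    ({w : FreeGroup α |
        wlen w = n ∧ (wlen (w * x) : ℝ) ≤ (wlen x : ℝ) - t}.encard : ℝ≥0∞)
      ≤ 2 * ((2 * Fintype.card α - 1 : ℕ) : ℝ≥0∞) ^ (((n : ℝ) - t) / 2) := by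
  simp only [wlen_eq_norm]
  set q := 2 * Fintype.card α - 1
  set S := {w : FreeGroup α | w.norm = n ∧ ((w * x).norm : ℝ) ≤ x.norm - t}
  rcases S.eq_empty_or_nonempty with hempty | ⟨w, hw, hwx⟩
  · simp [hempty]
  have hexp : 0 ≤ ((n : ℝ) - t) / 2 := by
    have htriangle : (x.norm : ℝ) ≤ n + (w * x).norm := by
      exact_mod_cast hw ▸ norm_le_norm_add_norm_mul w x
    linarith
  set k := ⌊((n : ℝ) - t) / 2⌋₊
  have hcard : S.encard ≤ 2 * (q : ℕ∞) ^ k := by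
    refine (Set.encard_le_encard ?_).trans (encard_norm_eq_and_norm_mul_lt_le x n k)
    rintro w ⟨hw, hwx⟩
    have hk : ((n : ℝ) - t) / 2 < k + 1 := Nat.lt_floor_add_one _
    refine ⟨hw, ?_⟩
    rify
    linarith
  have hq : 1 ≤ (q : ℝ≥0∞) := mod_cast one_le_two_mul_card_sub_one
  calc (S.encard : ℝ≥0∞) ≤ 2 * (q : ℝ≥0∞) ^ k := mod_cast ENat.toENNReal_le.mpr hcard
    _ = 2 * (q : ℝ≥0∞) ^ (k : ℝ) := by rw [ENNReal.rpow_natCast]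
    _ ≤ 2 * (q : ℝ≥0∞) ^ (((n : ℝ) - t) / 2) := by
      gcongr
      exact Nat.floor_le hexp

end Counting

/-- For every `x` in the free group, every `n ∈ ℕ` and every real `t`, the number of
`w` with `|w| = n` and `|w x| ≤ |x| - t` is at most `2 q^{(n-t)/2}`. -/
theorem count_truncated_words
    (r : ℕ) (hr : 2 ≤ r) (q : ℕ) (hq : q = 2 * r - 1)
    (x : FreeGroup (Fin r)) (n : ℕ) (t : ℝ) :
    ({w : FreeGroup (Fin r) |
        wlen w = n ∧ (wlen (w * x) : ℝ) ≤ (wlen x : ℝ) - t}.encard : ℝ≥0∞)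
      ≤ 2 * (q : ℝ≥0∞) ^ (((n : ℝ) - t) / 2) := by
  have : Nonempty (Fin r) := ⟨⟨0, by omega⟩⟩
  simpa only [hq, Fintype.card_fin] using count_truncated_words_general x n t
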